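/- There exists a constant C > 0 depending only on α such that for every u ∈ C^{1,2+α}([0,T]×ℝ) and every h ∈ C^α([0,T]×ℝ): [u]_{2+α} ≤ C·( [u_t + ½u_xx + h·u_x]_α + ⟨u(T,·)⟩_{2+α} + (1 + ‖h‖_α^{2+α})·‖u‖₀ ), where ⟨u(T,·)⟩_{2+α} denotes the α-Hölder constant of the second spatial derivative of the terminal slice x ↦ u(T,x). -/

import Mathlib

open Set Filter

noncomputable section

/-- The parabolic distance on `[0,T] × ℝ`:
`d_p((t₁,x₁),(t₂,x₂)) = √|t₁−t₂| + |x₁−x₂|`. -/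
def pd (t₁ x₁ t₂ x₂ : ℝ) : ℝ := Real.sqrt |t₁ - t₂| + |x₁ - x₂|

/-- Sup-norm `‖u‖₀` of `u` over `[0,T] × ℝ`. -/
def supN (T : ℝ) (u : ℝ → ℝ → ℝ) : ℝ :=
  sInf {M : ℝ | 0 ≤ M ∧ ∀ t ∈ Icc (0:ℝ) T, ∀ x : ℝ, |u t x| ≤ M}

/-- One-sided supremum `sup u` of `u` over `[0,T] × ℝ`. -/
def supU (T : ℝ) (u : ℝ → ℝ → ℝ) : ℝ :=
  sInf {M : ℝ | ∀ t ∈ Icc (0:ℝ) T, ∀ x : ℝ, u t x ≤ M}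

/-- The parabolic `α`-Hölder seminorm `[u]_α` of `u` over `[0,T] × ℝ`. -/
def hSemi (T α : ℝ) (u : ℝ → ℝ → ℝ) : ℝ :=
  sInf {K : ℝ | 0 ≤ K ∧ ∀ t₁ ∈ Icc (0:ℝ) T, ∀ t₂ ∈ Icc (0:ℝ) T, ∀ x₁ x₂ : ℝ,
    |u t₁ x₁ - u t₂ x₂| ≤ K * pd t₁ x₁ t₂ x₂ ^ α}

/-- The Hölder norm `‖u‖_α = ‖u‖₀ + [u]_α`. -/
def hNorm (T α : ℝ) (u : ℝ → ℝ → ℝ) : ℝ := supN T u + hSemi T α u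

/-- The weighted sup-norm `‖u‖_β = sup_{(t,x)} e^{−β(T−t)} |u(t,x)|`. -/
def wNorm (T β : ℝ) (u : ℝ → ℝ → ℝ) : ℝ :=
  sInf {M : ℝ | 0 ≤ M ∧ ∀ t ∈ Icc (0:ℝ) T, ∀ x : ℝ, Real.exp (-β * (T - t)) * |u t x| ≤ M}

/-- Membership in `C^α([0,T]×ℝ)`: bounded, continuous, with finite parabolic
`α`-Hölder constant. -/
def MemCa (T α : ℝ) (u : ℝ → ℝ → ℝ) : Prop :=
  ContinuousOn (fun p : ℝ × ℝ => u p.1 p.2) (Icc (0:ℝ) T ×ˢ (univ : Set ℝ)) ∧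
  (∃ M : ℝ, ∀ t ∈ Icc (0:ℝ) T, ∀ x : ℝ, |u t x| ≤ M) ∧
  (∃ K : ℝ, ∀ t₁ ∈ Icc (0:ℝ) T, ∀ t₂ ∈ Icc (0:ℝ) T, ∀ x₁ x₂ : ℝ,
    |u t₁ x₁ - u t₂ x₂| ≤ K * pd t₁ x₁ t₂ x₂ ^ α)

/-- Membership in `C^{1,2+α}([0,T]×ℝ)`: `u ∈ C^α`, and the partial derivatives
`u_t`, `u_x`, `u_xx` exist on `(0,T) × ℝ` and are (extended to) the `C^α` functions
`ut`, `ux`, `uxx`. -/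
structure MemC12a (T α : ℝ) (u ut ux uxx : ℝ → ℝ → ℝ) : Prop where
  memU : MemCa T α u
  memUt : MemCa T α ut
  memUx : MemCa T α ux
  memUxx : MemCa T α uxx
  hasUt : ∀ t ∈ Ioo (0:ℝ) T, ∀ x : ℝ, HasDerivAt (fun s => u s x) (ut t x) t
  hasUx : ∀ t ∈ Ioo (0:ℝ) T, ∀ x : ℝ, HasDerivAt (fun y => u t y) (ux t x) x
  hasUxx : ∀ t ∈ Ioo (0:ℝ) T, ∀ x : ℝ, HasDerivAt (fun y => ux t y) (uxx t x) x

/-- Sup-norm `‖g‖₀` of a function `g : ℝ → ℝ`. -/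
def gSupN (g : ℝ → ℝ) : ℝ := sInf {M : ℝ | 0 ≤ M ∧ ∀ x : ℝ, |g x| ≤ M}

/-- `α`-Hölder constant of a function `g : ℝ → ℝ`. -/
def gHSemi (α : ℝ) (g : ℝ → ℝ) : ℝ :=
  sInf {K : ℝ | 0 ≤ K ∧ ∀ x y : ℝ, |g x - g y| ≤ K * |x - y| ^ α}

/-- Membership in `C^{2+α}(ℝ)`: twice continuously differentiable, with `g`, `g'`, `g''`
bounded and `g''` `α`-Hölder. -/
def MemC2a (α : ℝ) (g : ℝ → ℝ) : Prop :=
  ContDiff ℝ 2 g ∧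
  (∃ M : ℝ, ∀ x : ℝ, |g x| ≤ M ∧ |deriv g x| ≤ M ∧ |deriv (deriv g) x| ≤ M) ∧
  (∃ K : ℝ, ∀ x y : ℝ, |deriv (deriv g) x - deriv (deriv g) y| ≤ K * |x - y| ^ α)

/-- The `C^{2+α}(ℝ)` norm: `‖g‖_{2+α} = ‖g‖₀ + ‖g'‖₀ + ‖g''‖₀ + [g'']_α`. -/
def gNorm2a (α : ℝ) (g : ℝ → ℝ) : ℝ :=
  gSupN g + gSupN (deriv g) + gSupN (deriv (deriv g)) + gHSemi α (deriv (deriv g))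

/-!
The second difference of `u` in space, of step `ε`, is `ε² u_xx` up to an error
`[u_xx]_α ε ^ (2 + α)`, and it solves a heat equation whose right-hand side is at most
`2 [F]_α ε ^ α`, where `F = u_t + a u_xx`. Its odd part about the midpoint of two points vanishes
at that midpoint, so on an interval to its right the maximum principle compares it with a
stationary barrier: linear, to match the lateral boundary value, plus quadratic, to absorb the
right-hand side, plus constant, to match the terminal value. With `ε` a small and the length of the
interval a large multiple of the distance of the two points, this bounds the spatial Hölder
constant of `u_xx` by half of itself plus a multiple of the data, hence by a multiple of the data.

The equation gives the spatial regularity of `u_t`, which passes to the time regularity of `u_xx`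
through mixed space-time differences of `u`. Finally interpolation at a scale `δ` bounds
`‖h‖_α ‖u_x‖_α` by a multiple of `‖h‖_α (δ ([u_t]_α + [u_xx]_α) + δ ^ (-1 - α) ‖u‖₀)`, and for `δ`
a small multiple of `1 / (1 + ‖h‖_α)` the first term is absorbed.
-/

open scoped Topology

/-! ### Powers -/

lemma le_mul_rpow_of_le_mul_rpow_of_le {a L M α β δ τ : ℝ} (hα : 0 ≤ α) (hαβ : α ≤ β)
    (hδ : 0 < δ) (hτ : 0 ≤ τ) (hL : 0 ≤ L) (hM : 0 ≤ M) (hrpow : a ≤ L * τ ^ β) (hconst : a ≤ M) :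
    a ≤ (L * δ ^ (β - α) + M / δ ^ α) * τ ^ α := by
  have hδα : 0 < δ ^ α := Real.rpow_pos_of_pos hδ α
  rcases le_total τ δ with hτδ | hδτ
  · calc a ≤ L * τ ^ β := hrpow
      _ = L * τ ^ (β - α) * τ ^ α := by
        rw [mul_assoc, ← Real.rpow_add_of_nonneg hτ (sub_nonneg.2 hαβ) hα, sub_add_cancel]
      _ ≤ L * δ ^ (β - α) * τ ^ α := by gcongr
      _ ≤ _ := by
        gcongr
        exact le_add_of_nonneg_right (by positivity)
  · calc a ≤ M := hconst
      _ = M / δ ^ α * δ ^ α := (div_mul_cancel₀ M hδα.ne').symm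
      _ ≤ M / δ ^ α * τ ^ α := by gcongr
      _ ≤ _ := by
        gcongr
        exact le_add_of_nonneg_left (by positivity)

lemma one_add_rpow_le {H p : ℝ} (hH : 0 ≤ H) (hp : 1 ≤ p) :
    (1 + H) ^ p ≤ 2 ^ (p - 1) * (1 + H ^ p) := by
  lift H to NNReal using hH
  have := NNReal.rpow_add_le_mul_rpow_add_rpow 1 H hp
  rw [NNReal.one_rpow] at this
  exact_mod_cast this

/-- The scale at which a transport term of size `H` is a small perturbation of the heat operator. -/
lemma exists_scale {α c : ℝ} (hα : 0 ≤ α) (hc : 0 < c) (hc1 : c ≤ 1) :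
    ∃ E, 0 < E ∧ ∀ H, 0 ≤ H → ∃ δ, 0 < δ ∧ δ ≤ 1 ∧ H * δ ≤ c ∧
      H / δ ^ (1 + α) ≤ E * (1 + H ^ (2 + α)) := by
  refine ⟨2 ^ (1 + α) / c ^ (1 + α), by positivity, fun H hH => ?_⟩
  refine ⟨c / (1 + H), by positivity, ?_, ?_, ?_⟩
  · rw [div_le_one (by positivity)]
    linarith
  · rw [mul_div_assoc', div_le_iff₀ (by positivity)]
    nlinarith
  · calc H / (c / (1 + H)) ^ (1 + α)
        = H * (1 + H) ^ (1 + α) / c ^ (1 + α) := by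
          rw [Real.div_rpow hc.le (by positivity), div_div_eq_mul_div]
      _ ≤ (1 + H) * (1 + H) ^ (1 + α) / c ^ (1 + α) := by
          gcongr
          exact le_add_of_nonneg_left zero_le_one
      _ = (1 + H) ^ (2 + α) / c ^ (1 + α) := by
          rw [← Real.rpow_one_add' (by positivity) (by positivity)]
          ring_nf
      _ ≤ 2 ^ (2 + α - 1) * (1 + H ^ (2 + α)) / c ^ (1 + α) := by
          gcongr
          exact one_add_rpow_le hH (by linarith)
      _ = 2 ^ (1 + α) / c ^ (1 + α) * (1 + H ^ (2 + α)) := by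
          rw [show 2 + α - 1 = 1 + α by ring, div_mul_eq_mul_div]

/-! ### Second differences and interpolation -/

section SecondDifference

variable {E : Type*} [NormedAddCommGroup E]

/-- `g` is `α`-Hölder on `ℝ` with constant `K`. The constant is real, as in the seminorms
`hSemi` and `gHSemi`, rather than a nonnegative real as in `HolderWith`. -/
def HolderBound (α K : ℝ) (g : ℝ → E) : Prop := ∀ x y, ‖g x - g y‖ ≤ K * |x - y| ^ α

lemma HolderBound.nonneg {α K : ℝ} {g : ℝ → E} (hg : HolderBound α K g) : 0 ≤ K := by
  simpa using (norm_nonneg _).trans (hg 1 0)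

/-- The centred second difference `g(x+ε) - 2g(x) + g(x-ε)`. -/
def secondDiff (ε : ℝ) (g : ℝ → E) (x : ℝ) : E := (g (x + ε) - g x) - (g x - g (x - ε))

lemma norm_secondDiff_le {g : ℝ → E} {m : ℝ} (hg : ∀ x, ‖g x‖ ≤ m) (ε x : ℝ) :
    ‖secondDiff ε g x‖ ≤ 4 * m := by
  refine (norm_sub_le_of_le (norm_sub_le_of_le (hg _) (hg _))
    (norm_sub_le_of_le (hg _) (hg _))).trans_eq ?_
  ring

lemma HolderBound.norm_secondDiff_le {α K ε : ℝ} {g : ℝ → E} (hg : HolderBound α K g)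
    (hε : 0 ≤ ε) (x : ℝ) : ‖secondDiff ε g x‖ ≤ 2 * K * ε ^ α := by
  have hright := hg (x + ε) x
  have hleft := hg x (x - ε)
  rw [add_sub_cancel_left, abs_of_nonneg hε] at hright
  rw [sub_sub_cancel, abs_of_nonneg hε] at hleft
  exact (norm_sub_le_of_le hright hleft).trans_eq (by ring)

lemma HolderBound.sub {α K L : ℝ} {g h : ℝ → E} (hg : HolderBound α K g)
    (hh : HolderBound α L h) : HolderBound α (K + L) (g - h) := fun x y => by
  rw [Pi.sub_apply, Pi.sub_apply, sub_sub_sub_comm, add_mul]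
  exact norm_sub_le_of_le (hg x y) (hh x y)

variable [NormedSpace ℝ E] {g g' g'' : ℝ → E}

lemma HolderBound.const_smul {α K c : ℝ} (hg : HolderBound α K g) (hc : 0 ≤ c) :
    HolderBound α (c * K) (c • g) := fun x y => by
  rw [Pi.smul_apply, Pi.smul_apply, ← smul_sub, norm_smul, Real.norm_of_nonneg hc, mul_assoc]
  exact mul_le_mul_of_nonneg_left (hg x y) hc

lemma hasDerivAt_secondDiff (hg : ∀ x, HasDerivAt g (g' x) x) (ε x : ℝ) :
    HasDerivAt (secondDiff ε g) (secondDiff ε g' x) x :=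
  (((hg _).comp_add_const x ε).sub (hg x)).sub ((hg x).sub ((hg _).comp_sub_const x ε))

lemma norm_secondDiff_le_of_norm_deriv2_le (hg : ∀ x, HasDerivAt g (g' x) x)
    (hg' : ∀ x, HasDerivAt g' (g'' x) x) {x ε M : ℝ} (hε : 0 ≤ ε)
    (hM : ∀ z ∈ Icc (x - ε) (x + ε), ‖g'' z‖ ≤ M) : ‖secondDiff ε g x‖ ≤ M * ε ^ 2 := by
  have hfirst : ∀ z ∈ Icc x (x + ε), ‖g' z - g' (z - ε)‖ ≤ M * ε := fun z hz => by
    have := (convex_Icc (x - ε) (x + ε)).norm_image_sub_le_of_norm_hasDerivWithin_le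
      (fun y _ => (hg' y).hasDerivWithinAt) hM
      (x := z - ε) (y := z) ⟨by linarith [hz.1], by linarith [hz.2]⟩ ⟨by linarith [hz.1], hz.2⟩
    rwa [sub_sub_cancel, Real.norm_of_nonneg hε] at this
  have := (convex_Icc x (x + ε)).norm_image_sub_le_of_norm_hasDerivWithin_le
    (f := fun z => g z - g (z - ε)) (x := x) (y := x + ε)
    (fun y _ => ((hg y).sub ((hg (y - ε)).comp_sub_const y ε)).hasDerivWithinAt) hfirst
    ⟨le_rfl, by linarith⟩ ⟨by linarith, le_rfl⟩
  rw [add_sub_cancel_left, add_sub_cancel_right, Real.norm_of_nonneg hε] at this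
  calc ‖secondDiff ε g x‖ = ‖g (x + ε) - g x - (g x - g (x - ε))‖ := rfl
    _ ≤ M * ε * ε := this
    _ = M * ε ^ 2 := by ring

lemma norm_secondDiff_sub_smul_le (hg : ∀ x, HasDerivAt g (g' x) x)
    (hg' : ∀ x, HasDerivAt g' (g'' x) x) {α K ε : ℝ} (hα : 0 ≤ α) (hK : HolderBound α K g'')
    (hε : 0 ≤ ε) (x : ℝ) : ‖secondDiff ε g x - ε ^ 2 • g'' x‖ ≤ K * ε ^ α * ε ^ 2 := by
  have hquad : ∀ z, HasDerivAt (fun z => ((z - x) ^ 2 / 2) • g'' x) ((z - x) • g'' x) z := fun z =>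
    (((((hasDerivAt_id' z).sub_const x).pow 2).div_const 2).smul_const _).congr_deriv (by simp)
  have hlin : ∀ z, HasDerivAt (fun z => (z - x) • g'' x) (g'' x) z := fun z =>
    (((hasDerivAt_id' z).sub_const x).smul_const _).congr_deriv (one_smul _ _)
  have := norm_secondDiff_le_of_norm_deriv2_le (x := x) (M := K * ε ^ α)
    (fun z => (hg z).sub (hquad z)) (fun z => (hg' z).sub (hlin z)) hε fun z hz => by
      refine (hK z x).trans (mul_le_mul_of_nonneg_left ?_ hK.nonneg)
      exact Real.rpow_le_rpow (abs_nonneg _)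
        (abs_le.2 ⟨by linarith [hz.1], by linarith [hz.2]⟩) hα
  convert this using 2
  simp only [secondDiff, Pi.sub_apply]
  module

lemma norm_secondDiff_sub_secondDiff_le (hg : ∀ x, HasDerivAt g (g' x) x)
    (hg' : ∀ x, HasDerivAt g' (g'' x) x) {α K ε : ℝ} (hK : HolderBound α K g'') (hε : 0 ≤ ε)
    (x y : ℝ) : ‖secondDiff ε g x - secondDiff ε g y‖ ≤ K * |x - y| ^ α * ε ^ 2 := by
  have := norm_secondDiff_le_of_norm_deriv2_le (x := 0) (M := K * |x - y| ^ α)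
    (g := fun z => g (x + z) - g (y + z))
    (fun z => ((hg _).comp_const_add x z).sub ((hg _).comp_const_add y z))
    (fun z => ((hg' _).comp_const_add x z).sub ((hg' _).comp_const_add y z)) hε
    fun z _ => by simpa only [add_sub_add_right_eq_sub] using hK (x + z) (y + z)
  convert this using 2
  simp only [secondDiff, zero_add, add_zero, zero_sub, ← sub_eq_add_neg]
  abel

lemma norm_sub_sub_smul_deriv_le (hg : ∀ x, HasDerivAt g (g' x) x)
    (hg' : ∀ x, HasDerivAt g' (g'' x) x) {x δ S : ℝ} (hδ : 0 ≤ δ)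
    (hS : ∀ z ∈ Icc x (x + δ), ‖g'' z‖ ≤ S) :
    ‖g (x + δ) - g x - δ • g' x‖ ≤ S * δ ^ 2 := by
  have hx : x ∈ Icc x (x + δ) := ⟨le_rfl, by linarith⟩
  have hxδ : x + δ ∈ Icc x (x + δ) := ⟨by linarith, le_rfl⟩
  have hS0 : 0 ≤ S := (norm_nonneg _).trans (hS x hx)
  have hfirst : ∀ z ∈ Icc x (x + δ), ‖g' z - g' x‖ ≤ S * δ := fun z hz => by
    refine ((convex_Icc x (x + δ)).norm_image_sub_le_of_norm_hasDerivWithin_le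
      (fun y _ => (hg' y).hasDerivWithinAt) hS hx hz).trans (mul_le_mul_of_nonneg_left ?_ hS0)
    rw [Real.norm_of_nonneg (by linarith [hz.1])]
    linarith [hz.2]
  have hlin : ∀ z, HasDerivAt (fun z => (z - x) • g' x) (g' x) z := fun z =>
    (((hasDerivAt_id' z).sub_const x).smul_const _).congr_deriv (one_smul _ _)
  have := (convex_Icc x (x + δ)).norm_image_sub_le_of_norm_hasDerivWithin_le
    (fun y _ => ((hg y).sub (hlin y)).hasDerivWithinAt) hfirst hx hxδ
  rw [add_sub_cancel_left, Real.norm_of_nonneg hδ] at this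
  calc ‖g (x + δ) - g x - δ • g' x‖ ≤ S * δ * δ := by
        convert this using 2
        simp only [Pi.sub_apply, add_sub_cancel_left, sub_self, zero_smul, sub_zero]
        abel
    _ = S * δ ^ 2 := by ring

section Interpolation

variable {α K m δ : ℝ} (hg : ∀ x, HasDerivAt g (g' x) x) (hg' : ∀ x, HasDerivAt g' (g'' x) x)
  (hα : 0 ≤ α) (hK : HolderBound α K g'') (hm : ∀ x, ‖g x‖ ≤ m) (hδ : 0 < δ)
include hg hg' hα hK hm hδ

lemma norm_deriv2_le_of_holderBound (x : ℝ) : ‖g'' x‖ ≤ K * δ ^ α + 4 * m / δ ^ 2 := by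
  have happrox := norm_secondDiff_sub_smul_le hg hg' hα hK hδ.le x
  have hsmul : ‖δ ^ 2 • g'' x‖ ≤ 4 * m + K * δ ^ α * δ ^ 2 :=
    (norm_le_norm_add_norm_sub _ _).trans (add_le_add (norm_secondDiff_le hm δ x) happrox)
  rw [norm_smul, Real.norm_of_nonneg (by positivity)] at hsmul
  refine le_of_mul_le_mul_left (hsmul.trans_eq ?_) (show 0 < δ ^ 2 by positivity)
  field_simp
  ring

lemma norm_deriv_le_of_holderBound (x : ℝ) : ‖g' x‖ ≤ K * δ ^ (1 + α) + 6 * m / δ := by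
  have htaylor := norm_sub_sub_smul_deriv_le (x := x) hg hg' hδ.le
    fun z _ => norm_deriv2_le_of_holderBound hg hg' hα hK hm hδ z
  have hsmul : ‖δ • g' x‖ ≤ (m + m) + (K * δ ^ α + 4 * m / δ ^ 2) * δ ^ 2 :=
    (norm_le_norm_add_norm_sub _ _).trans
      (add_le_add (norm_sub_le_of_le (hm (x + δ)) (hm x)) htaylor)
  rw [norm_smul, Real.norm_of_nonneg hδ.le] at hsmul
  refine le_of_mul_le_mul_left (hsmul.trans_eq ?_) hδ
  rw [Real.rpow_one_add' hδ.le (by linarith)]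
  field_simp
  ring

lemma holderBound_deriv (hα1 : α ≤ 1) :
    HolderBound α (3 * K * δ + 16 * (m / δ ^ (1 + α))) g' := by
  intro x y
  have hK0 := hK.nonneg
  have hm0 : 0 ≤ m := (norm_nonneg _).trans (hm 0)
  have hrpow : ‖g' x - g' y‖ ≤ (K * δ ^ α + 4 * m / δ ^ 2) * |x - y| ^ (1 : ℝ) := by
    rw [Real.rpow_one]
    exact convex_univ.norm_image_sub_le_of_norm_hasDerivWithin_le
      (fun z _ => (hg' z).hasDerivWithinAt)
      (fun z _ => norm_deriv2_le_of_holderBound hg hg' hα hK hm hδ z) (mem_univ y) (mem_univ x)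
  have hconst := norm_sub_le_of_le (norm_deriv_le_of_holderBound hg hg' hα hK hm hδ x)
    (norm_deriv_le_of_holderBound hg hg' hα hK hm hδ y)
  refine (le_mul_rpow_of_le_mul_rpow_of_le hα hα1 hδ (abs_nonneg _) (by positivity)
    (by positivity) hrpow hconst).trans_eq ?_
  rw [Real.rpow_one_add' hδ.le (by linarith), Real.rpow_sub hδ, Real.rpow_one]
  field_simp
  ring

end Interpolation

end SecondDifference

/-! ### The maximum principle -/

lemma deriv2_nonpos_of_isLocalMax {f f' : ℝ → ℝ} {f'' x : ℝ} (hmax : IsLocalMax f x)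
    (hf : ∀ᶠ y in 𝓝 x, HasDerivAt f (f' y) y) (hf' : HasDerivAt f' f'' x) : f'' ≤ 0 := by
  by_contra! hpos
  have hderiv : deriv f =ᶠ[𝓝 x] f' := hf.mono fun _ hy => hy.deriv
  have hderiv2 : deriv (deriv f) x = f'' := (hf'.congr_of_eventuallyEq hderiv).deriv
  have hmin : IsLocalMin f x := isLocalMin_of_deriv_deriv_pos (hderiv2 ▸ hpos)
    hmax.deriv_eq_zero hf.self_of_nhds.continuousAt
  have hconst : f =ᶠ[𝓝 x] fun _ => f x := by
    filter_upwards [hmin, hmax] with y hmin hmax using le_antisymm hmax hmin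
  have hzero : deriv (deriv f) x = 0 := by
    rw [hconst.deriv.deriv_eq, deriv_const', deriv_const]
  exact hpos.ne' (hderiv2.symm.trans hzero)

lemma rightDeriv_nonpos_of_eventually_le {f : ℝ → ℝ} {f' x : ℝ}
    (hf : HasDerivWithinAt f f' (Ici x) x) (hle : ∀ᶠ y in 𝓝[>] x, f y ≤ f x) : f' ≤ 0 := by
  have hslope := (hasDerivWithinAt_iff_tendsto_slope' self_notMem_Ioi).1 hf.Ioi_of_Ici
  refine le_of_tendsto hslope ?_
  filter_upwards [hle, self_mem_nhdsWithin] with y hy hxy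
  rw [slope_def_field]
  exact div_nonpos_of_nonpos_of_nonneg (sub_nonpos.2 hy) (sub_nonneg.2 (le_of_lt hxy))

/-- `w` is continuous on `[t₀,t₁] × J` and has there, before time `t₁` and in the interior of `J`,
the derivatives `w_t = wt`, `w_y = wy` and `w_yy = wyy` entering a parabolic operator. Equations
are solved backwards from `t₁`, so that `w_t` need only be a derivative from the right; this lets
`t₀` count as an interior time. -/
structure IsClassicalOn (t₀ t₁ : ℝ) (J : Set ℝ) (w wt wy wyy : ℝ → ℝ → ℝ) : Prop where
  continuousOn : ContinuousOn (fun p : ℝ × ℝ => w p.1 p.2) (Icc t₀ t₁ ×ˢ J)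
  hasDerivWithinAt_time : ∀ s ∈ Ico t₀ t₁, ∀ y ∈ interior J,
    HasDerivWithinAt (fun s => w s y) (wt s y) (Ici s) s
  hasDerivAt_space : ∀ s ∈ Ico t₀ t₁, ∀ y ∈ interior J, HasDerivAt (w s) (wy s y) y
  hasDerivAt_space2 : ∀ s ∈ Ico t₀ t₁, ∀ y ∈ interior J, HasDerivAt (wy s) (wyy s y) y

namespace IsClassicalOn

variable {t₀ t₁ : ℝ} {J : Set ℝ} {w wt wy wyy v vt vy vyy : ℝ → ℝ → ℝ}

lemma mono {J' : Set ℝ} (hw : IsClassicalOn t₀ t₁ J w wt wy wyy) (hJ : J' ⊆ J) :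
    IsClassicalOn t₀ t₁ J' w wt wy wyy where
  continuousOn := hw.continuousOn.mono (prod_mono_right hJ)
  hasDerivWithinAt_time s hs y hy := hw.hasDerivWithinAt_time s hs y (interior_mono hJ hy)
  hasDerivAt_space s hs y hy := hw.hasDerivAt_space s hs y (interior_mono hJ hy)
  hasDerivAt_space2 s hs y hy := hw.hasDerivAt_space2 s hs y (interior_mono hJ hy)

lemma neg (hw : IsClassicalOn t₀ t₁ J w wt wy wyy) :
    IsClassicalOn t₀ t₁ J (-w) (-wt) (-wy) (-wyy) where
  continuousOn := hw.continuousOn.neg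
  hasDerivWithinAt_time s hs y hy := (hw.hasDerivWithinAt_time s hs y hy).neg
  hasDerivAt_space s hs y hy := (hw.hasDerivAt_space s hs y hy).neg
  hasDerivAt_space2 s hs y hy := (hw.hasDerivAt_space2 s hs y hy).neg

lemma sub (hw : IsClassicalOn t₀ t₁ J w wt wy wyy) (hv : IsClassicalOn t₀ t₁ J v vt vy vyy) :
    IsClassicalOn t₀ t₁ J (w - v) (wt - vt) (wy - vy) (wyy - vyy) where
  continuousOn := hw.continuousOn.sub hv.continuousOn
  hasDerivWithinAt_time s hs y hy :=
    (hw.hasDerivWithinAt_time s hs y hy).sub (hv.hasDerivWithinAt_time s hs y hy)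
  hasDerivAt_space s hs y hy := (hw.hasDerivAt_space s hs y hy).sub (hv.hasDerivAt_space s hs y hy)
  hasDerivAt_space2 s hs y hy :=
    (hw.hasDerivAt_space2 s hs y hy).sub (hv.hasDerivAt_space2 s hs y hy)

lemma of_space {φ φ' φ'' : ℝ → ℝ} (hφ : ∀ y, HasDerivAt φ (φ' y) y)
    (hφ' : ∀ y, HasDerivAt φ' (φ'' y) y) :
    IsClassicalOn t₀ t₁ J (fun _ => φ) 0 (fun _ => φ') (fun _ => φ'') where
  continuousOn := ((continuous_iff_continuousAt.2 fun y => (hφ y).continuousAt).comp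
    continuous_snd).continuousOn
  hasDerivWithinAt_time _ _ _ _ := hasDerivWithinAt_const _ _ _
  hasDerivAt_space _ _ y _ := hφ y
  hasDerivAt_space2 _ _ y _ := hφ' y

lemma linear_time (η : ℝ) :
    IsClassicalOn t₀ t₁ J (fun s _ => η * (t₁ - s)) (fun _ _ => -η) 0 0 where
  continuousOn := by fun_prop
  hasDerivWithinAt_time s _ _ _ :=
    (((hasDerivAt_id' s).const_sub t₁).const_mul η).hasDerivWithinAt.congr_deriv (mul_neg_one η)
  hasDerivAt_space _ _ _ _ := hasDerivAt_const _ _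
  hasDerivAt_space2 _ _ _ _ := hasDerivAt_const _ _

section MaximumPrinciple

variable {y₀ y₁ a : ℝ} (hw : IsClassicalOn t₀ t₁ (Icc y₀ y₁) w wt wy wyy) (ha : 0 ≤ a)
  (hterminal : ∀ y ∈ Icc y₀ y₁, w t₁ y ≤ 0) (hleft : ∀ s ∈ Icc t₀ t₁, w s y₀ ≤ 0)
  (hright : ∀ s ∈ Icc t₀ t₁, w s y₁ ≤ 0)
include hw ha hterminal hleft hright

lemma nonpos_of_pos (hpos : ∀ s ∈ Ico t₀ t₁, ∀ y ∈ Ioo y₀ y₁, 0 < wt s y + a * wyy s y) :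
    ∀ s ∈ Icc t₀ t₁, ∀ y ∈ Icc y₀ y₁, w s y ≤ 0 := by
  intro s' hs' y' hy'
  obtain ⟨⟨s, y⟩, ⟨hs, hy⟩, hmax⟩ :=
    (isCompact_Icc.prod isCompact_Icc).exists_isMaxOn ⟨(s', y'), hs', hy'⟩ hw.continuousOn
  refine (hmax (show (s', y') ∈ _ from ⟨hs', hy'⟩)).trans ?_
  rcases hs.2.eq_or_lt with rfl | hst₁
  · exact hterminal y hy
  rcases hy.1.eq_or_lt with rfl | hy₀
  · exact hleft s hs
  rcases hy.2.eq_or_lt with rfl | hy₁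
  · exact hright s hs
  have hint : Ioo y₀ y₁ ⊆ interior (Icc y₀ y₁) := interior_Icc.superset
  have htime : wt s y ≤ 0 := by
    refine rightDeriv_nonpos_of_eventually_le
      (hw.hasDerivWithinAt_time s ⟨hs.1, hst₁⟩ y (hint ⟨hy₀, hy₁⟩)) ?_
    filter_upwards [Ioo_mem_nhdsGT hst₁] with z hz
    exact hmax (show (z, y) ∈ _ from ⟨⟨hs.1.trans hz.1.le, hz.2.le⟩, hy⟩)
  have hspace : wyy s y ≤ 0 := by
    refine deriv2_nonpos_of_isLocalMax (f := w s) (f' := wy s) ?_ ?_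
      (hw.hasDerivAt_space2 s ⟨hs.1, hst₁⟩ y (hint ⟨hy₀, hy₁⟩))
    · filter_upwards [Icc_mem_nhds hy₀ hy₁] with z hz using hmax (show (s, z) ∈ _ from ⟨hs, hz⟩)
    · filter_upwards [Ioo_mem_nhds hy₀ hy₁] with z hz
      exact hw.hasDerivAt_space s ⟨hs.1, hst₁⟩ z (hint hz)
  have := hpos s ⟨hs.1, hst₁⟩ y ⟨hy₀, hy₁⟩
  exact absurd (add_nonpos htime (mul_nonpos_of_nonneg_of_nonpos ha hspace)) this.not_ge

lemma nonpos_of_nonneg (hnonneg : ∀ s ∈ Ico t₀ t₁, ∀ y ∈ Ioo y₀ y₁, 0 ≤ wt s y + a * wyy s y) :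
    ∀ s ∈ Icc t₀ t₁, ∀ y ∈ Icc y₀ y₁, w s y ≤ 0 := by
  intro s hs y hy
  have hperturbed : ∀ η : ℝ, 0 < η → w s y ≤ η * (t₁ - s) := fun η hη => by
    have htime : ∀ r ∈ Icc t₀ t₁, 0 ≤ η * (t₁ - r) := fun r hr =>
      mul_nonneg hη.le (sub_nonneg.2 hr.2)
    refine sub_nonpos.1 ((hw.sub (linear_time η)).nonpos_of_pos ha ?_ ?_ ?_ ?_ s hs y hy)
    · exact fun z hz => by simpa using hterminal z hz
    · exact fun r hr => sub_nonpos.2 ((hleft r hr).trans (htime r hr))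
    · exact fun r hr => sub_nonpos.2 ((hright r hr).trans (htime r hr))
    · intro r hr z hz
      simp only [Pi.sub_apply, Pi.zero_apply]
      linarith [hnonneg r hr z hz]
  have hlim : Tendsto (fun η : ℝ => η * (t₁ - s)) (𝓝[>] 0) (𝓝 0) :=
    ((continuous_mul_const (t₁ - s)).tendsto' 0 0 (zero_mul _)).mono_left nhdsWithin_le_nhds
  exact ge_of_tendsto hlim (eventually_nhdsWithin_of_forall hperturbed)

end MaximumPrinciple

section Barrier

variable {R A M L a : ℝ} (hw : IsClassicalOn t₀ t₁ (Icc 0 R) w wt wy wyy) (hR : 0 < R)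
  (ha : 0 < a)
include hw hR ha

/-- The barrier `A y / R + M y (R - y) / (2a) + L` is stationary and solves `a φ'' = -M`. -/
lemma le_barrier (hA : 0 ≤ A) (hM : 0 ≤ M) (hL : 0 ≤ L)
    (heq : ∀ s ∈ Ico t₀ t₁, ∀ y ∈ Ioo 0 R, -M ≤ wt s y + a * wyy s y)
    (hterminal : ∀ y ∈ Icc 0 R, w t₁ y ≤ L) (hleft : ∀ s ∈ Icc t₀ t₁, w s 0 ≤ 0)
    (hright : ∀ s ∈ Icc t₀ t₁, w s R ≤ A) :
    ∀ s ∈ Icc t₀ t₁, ∀ y ∈ Icc 0 R, w s y ≤ A / R * y + M / (2 * a) * (y * (R - y)) + L := by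
  intro s hs y hy
  have hφ : ∀ y, HasDerivAt (fun y => A / R * y + M / (2 * a) * (y * (R - y)) + L)
      (A / R + M / (2 * a) * (R - 2 * y)) y := fun y => by
    have hid := hasDerivAt_id' y
    refine (((hid.const_mul (A / R)).add
      ((hid.mul (hid.const_sub R)).const_mul (M / (2 * a)))).add_const L).congr_deriv ?_
    ring
  have hφ' : ∀ y, HasDerivAt (fun y => A / R + M / (2 * a) * (R - 2 * y)) (-(M / a)) y := by
    intro y
    refine (((((hasDerivAt_id' y).const_mul 2).const_sub R).const_mul (M / (2 * a))).const_add
      (A / R)).congr_deriv ?_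
    field_simp
  have hnonneg : ∀ z ∈ Icc 0 R, 0 ≤ A / R * z + M / (2 * a) * (z * (R - z)) := fun z hz => by
    have := hz.1
    have := sub_nonneg.2 hz.2
    positivity
  refine sub_nonpos.1 ((hw.sub (of_space hφ hφ')).nonpos_of_nonneg ha.le ?_ ?_ ?_ ?_ s hs y hy)
  · exact fun z hz => sub_nonpos.2 ((hterminal z hz).trans (le_add_of_nonneg_left (hnonneg z hz)))
  · exact fun r hr => sub_nonpos.2 ((hleft r hr).trans (by simpa using hL))
  · refine fun r hr => sub_nonpos.2 ((hright r hr).trans ?_)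
    simpa [hR.ne'] using hL
  · intro r hr z hz
    simp only [Pi.sub_apply, Pi.zero_apply]
    have : a * (M / a) = M := mul_div_cancel₀ M ha.ne'
    linarith [heq r hr z hz]

lemma abs_le_barrier (heq : ∀ s ∈ Ico t₀ t₁, ∀ y ∈ Ioo 0 R, |wt s y + a * wyy s y| ≤ M)
    (hM : 0 ≤ M) (hterminal : ∀ y ∈ Icc 0 R, |w t₁ y| ≤ L)
    (hleft : ∀ s ∈ Icc t₀ t₁, w s 0 = 0) (hright : ∀ s ∈ Icc t₀ t₁, |w s R| ≤ A) :
    ∀ s ∈ Icc t₀ t₁, ∀ y ∈ Icc 0 R, |w s y| ≤ A / R * y + M / (2 * a) * (y * (R - y)) + L := by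
  intro s hs y hy
  have hA : 0 ≤ A := (abs_nonneg _).trans (hright s hs)
  have hL : 0 ≤ L := (abs_nonneg _).trans (hterminal y hy)
  refine abs_le'.2 ⟨?_, ?_⟩
  · exact hw.le_barrier hR ha hA hM hL (fun r hr z hz => (abs_le.1 (heq r hr z hz)).1)
      (fun z hz => (abs_le'.1 (hterminal z hz)).1) (fun r hr => (hleft r hr).le)
      (fun r hr => (abs_le'.1 (hright r hr)).1) s hs y hy
  · refine hw.neg.le_barrier hR ha hA hM hL (fun r hr z hz => ?_)
      (fun z hz => (abs_le'.1 (hterminal z hz)).2) (fun r hr => (neg_eq_zero.2 (hleft r hr)).le)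
      (fun r hr => (abs_le'.1 (hright r hr)).2) s hs y hy
    simp only [Pi.neg_apply]
    linarith [(abs_le'.1 (heq r hr z hz)).1]

end Barrier

end IsClassicalOn

/-! ### Hölder seminorms -/

lemma le_sInf_mul {S : Set ℝ} {a b : ℝ} (hS : S.Nonempty) (hb : 0 ≤ b)
    (h : ∀ K ∈ S, a ≤ K * b) : a ≤ sInf S * b := by
  rcases hb.eq_or_lt with rfl | hb
  · obtain ⟨K, hK⟩ := hS
    simpa using h K hK
  · rw [← div_le_iff₀ hb]
    exact le_csInf hS fun K hK => (div_le_iff₀ hb).2 (h K hK)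

lemma HolderBound.gHSemi {α K : ℝ} {g : ℝ → ℝ} (hg : HolderBound α K g) :
    HolderBound α (gHSemi α g) g := fun x y =>
  le_sInf_mul ⟨K, hg.nonneg, hg⟩ (by positivity) fun _ hK => hK.2 x y

lemma gHSemi_nonneg (α : ℝ) (g : ℝ → ℝ) : 0 ≤ gHSemi α g := Real.sInf_nonneg fun _ hK => hK.1

lemma supN_nonneg (T : ℝ) (v : ℝ → ℝ → ℝ) : 0 ≤ supN T v := Real.sInf_nonneg fun _ hM => hM.1

lemma hSemi_nonneg (T α : ℝ) (v : ℝ → ℝ → ℝ) : 0 ≤ hSemi T α v :=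
  Real.sInf_nonneg fun _ hK => hK.1

lemma hNorm_nonneg (T α : ℝ) (v : ℝ → ℝ → ℝ) : 0 ≤ hNorm T α v :=
  add_nonneg (supN_nonneg T v) (hSemi_nonneg T α v)

lemma pd_nonneg (t s x y : ℝ) : 0 ≤ pd t x s y := by unfold pd; positivity

lemma pd_same_time (t x y : ℝ) : pd t x t y = |x - y| := by simp [pd]

lemma pd_same_space (t s x : ℝ) : pd t x s x = √|t - s| := by simp [pd]

section Seminorms

variable {T α : ℝ} {v w : ℝ → ℝ → ℝ}

lemma supN_le {M : ℝ} (hM : 0 ≤ M) (h : ∀ t ∈ Icc 0 T, ∀ x, |v t x| ≤ M) : supN T v ≤ M :=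
  csInf_le ⟨0, fun _ hM => hM.1⟩ ⟨hM, h⟩

lemma hSemi_le {K : ℝ} (hK : 0 ≤ K) (h : ∀ t ∈ Icc 0 T, ∀ s ∈ Icc 0 T, ∀ x y,
    |v t x - v s y| ≤ K * pd t x s y ^ α) : hSemi T α v ≤ K :=
  csInf_le ⟨0, fun _ hK => hK.1⟩ ⟨hK, h⟩

lemma hSemi_le_add {A B : ℝ} (hα : 0 ≤ α) (hA : 0 ≤ A) (hB : 0 ≤ B)
    (hspace : ∀ t ∈ Icc 0 T, HolderBound α A (v t))
    (htime : ∀ t ∈ Icc 0 T, ∀ s ∈ Icc 0 T, ∀ x, |v t x - v s x| ≤ B * √|t - s| ^ α) :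
    hSemi T α v ≤ A + B := by
  refine hSemi_le (add_nonneg hA hB) fun t ht s hs x y => ?_
  calc |v t x - v s y| ≤ |v t x - v t y| + |v t y - v s y| := abs_sub_le _ _ _
    _ ≤ A * |x - y| ^ α + B * √|t - s| ^ α := add_le_add (hspace t ht x y) (htime t ht s hs y)
    _ ≤ A * pd t x s y ^ α + B * pd t x s y ^ α := by
      unfold pd
      gcongr
      · exact le_add_of_nonneg_left (Real.sqrt_nonneg _)
      · exact le_add_of_nonneg_right (abs_nonneg _)
    _ = (A + B) * pd t x s y ^ α := (add_mul _ _ _).symm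

namespace MemCa

variable (hv : MemCa T α v) (hw : MemCa T α w)
include hv

lemma abs_le_supN {t : ℝ} (ht : t ∈ Icc 0 T) (x : ℝ) : |v t x| ≤ supN T v := by
  obtain ⟨-, ⟨M, hM⟩, -⟩ := hv
  exact le_csInf ⟨M, (abs_nonneg _).trans (hM t ht x), hM⟩ fun _ hM => hM.2 t ht x

lemma abs_sub_le {t s : ℝ} (ht : t ∈ Icc 0 T) (hs : s ∈ Icc 0 T) (x y : ℝ) :
    |v t x - v s y| ≤ hSemi T α v * pd t x s y ^ α := by
  obtain ⟨-, -, K, hK⟩ := hv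
  have hpd : ∀ t s x y, 0 ≤ pd t x s y ^ α := fun t s x y =>
    Real.rpow_nonneg (pd_nonneg t s x y) α
  refine le_sInf_mul ⟨max K 0, le_max_right K 0, fun t ht s hs x y => ?_⟩ (hpd t s x y)
    fun _ hK => hK.2 t ht s hs x y
  exact (hK t ht s hs x y).trans (mul_le_mul_of_nonneg_right (le_max_left K 0) (hpd t s x y))

lemma holderBound {t : ℝ} (ht : t ∈ Icc 0 T) : HolderBound α (hSemi T α v) (v t) := fun x y => by
  simpa only [pd_same_time, Real.norm_eq_abs] using hv.abs_sub_le ht ht x y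

lemma abs_sub_le_sqrt {t s : ℝ} (ht : t ∈ Icc 0 T) (hs : s ∈ Icc 0 T) (x : ℝ) :
    |v t x - v s x| ≤ hSemi T α v * √|t - s| ^ α := by
  simpa only [pd_same_space] using hv.abs_sub_le ht hs x x

lemma const_smul (c : ℝ) : MemCa T α (c • v) := by
  refine ⟨hv.1.const_smul c, ⟨|c| * supN T v, fun t ht x => ?_⟩,
    |c| * hSemi T α v, fun t ht s hs x y => ?_⟩
  · simpa [abs_mul] using mul_le_mul_of_nonneg_left (hv.abs_le_supN ht x) (abs_nonneg c)
  · simpa [← mul_sub, abs_mul, mul_assoc] using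
      mul_le_mul_of_nonneg_left (hv.abs_sub_le ht hs x y) (abs_nonneg c)

lemma hSemi_const_smul_le {c : ℝ} (hc : 0 ≤ c) : hSemi T α (c • v) ≤ c * hSemi T α v := by
  refine hSemi_le (mul_nonneg hc (hSemi_nonneg T α v)) fun t ht s hs x y => ?_
  simpa [← mul_sub, abs_mul, abs_of_nonneg hc, mul_assoc] using
    mul_le_mul_of_nonneg_left (hv.abs_sub_le ht hs x y) hc

lemma tendstoUniformly (hα : 0 < α) {t : ℝ} (ht : t ∈ Icc 0 T) :
    TendstoUniformly v (v t) (𝓝[Icc 0 T] t) := by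
  have hlim : Tendsto (fun s => hSemi T α v * √|t - s| ^ α) (𝓝[Icc 0 T] t) (𝓝 0) := by
    refine (Continuous.tendsto' ?_ t 0 ?_).mono_left nhdsWithin_le_nhds
    · exact continuous_const.mul
        ((Real.continuous_sqrt.comp (by fun_prop)).rpow_const fun _ => Or.inr hα.le)
    · simp [hα.ne']
  rw [Metric.tendstoUniformly_iff]
  intro ε hε
  filter_upwards [hlim.eventually_lt_const hε, self_mem_nhdsWithin] with s hlt hs x
  exact (hv.abs_sub_le_sqrt ht hs x).trans_lt hlt

lemma hasDerivAt_of_forall_Ioo {v' : ℝ → ℝ → ℝ} (hv' : MemCa T α v') (hT : 0 < T) (hα : 0 < α)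
    (h : ∀ t ∈ Ioo 0 T, ∀ x, HasDerivAt (v t) (v' t x) x) :
    ∀ t ∈ Icc 0 T, ∀ x, HasDerivAt (v t) (v' t x) x := by
  intro t ht x
  have hle : 𝓝[Ioo 0 T] t ≤ 𝓝[Icc 0 T] t := nhdsWithin_mono t Ioo_subset_Icc_self
  have : (𝓝[Ioo 0 T] t).NeBot := by
    rwa [← mem_closure_iff_nhdsWithin_neBot, closure_Ioo hT.ne]
  refine hasDerivAt_of_tendstoUniformly
    (fun U hU => hle (hv'.tendstoUniformly hα ht U hU)) (eventually_nhdsWithin_of_forall h)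
    (fun y => ((hv.tendstoUniformly hα ht).tendsto_at y).mono_left hle) x

include hw

lemma add : MemCa T α (v + w) := by
  refine ⟨hv.1.add hw.1, ⟨supN T v + supN T w, fun t ht x => ?_⟩,
    hSemi T α v + hSemi T α w, fun t ht s hs x y => ?_⟩
  · exact (abs_add_le _ _).trans (add_le_add (hv.abs_le_supN ht x) (hw.abs_le_supN ht x))
  · rw [add_mul, Pi.add_apply, Pi.add_apply, Pi.add_apply, Pi.add_apply, add_sub_add_comm]
    exact (abs_add_le _ _).trans (add_le_add (hv.abs_sub_le ht hs x y) (hw.abs_sub_le ht hs x y))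

lemma hSemi_sub_le : hSemi T α (v - w) ≤ hSemi T α v + hSemi T α w := by
  refine hSemi_le (add_nonneg (hSemi_nonneg T α v) (hSemi_nonneg T α w)) fun t ht s hs x y => ?_
  rw [add_mul, Pi.sub_apply, Pi.sub_apply, Pi.sub_apply, Pi.sub_apply, sub_sub_sub_comm]
  exact (abs_sub _ _).trans (add_le_add (hv.abs_sub_le ht hs x y) (hw.abs_sub_le ht hs x y))

lemma abs_mul_sub_mul_le {t s : ℝ} (ht : t ∈ Icc 0 T) (hs : s ∈ Icc 0 T) (x y : ℝ) :
    |v t x * w t x - v s y * w s y| ≤ hNorm T α v * hNorm T α w * pd t x s y ^ α := by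
  have hpd : 0 ≤ pd t x s y ^ α := Real.rpow_nonneg (pd_nonneg t s x y) α
  have := supN_nonneg T v
  have := hSemi_nonneg T α v
  have := supN_nonneg T w
  have := hSemi_nonneg T α w
  calc |v t x * w t x - v s y * w s y|
      = |v t x * (w t x - w s y) + (v t x - v s y) * w s y| := by ring_nf
    _ ≤ |v t x| * |w t x - w s y| + |v t x - v s y| * |w s y| := by
      simpa only [abs_mul] using abs_add_le (v t x * (w t x - w s y)) ((v t x - v s y) * w s y)
    _ ≤ supN T v * (hSemi T α w * pd t x s y ^ α) + hSemi T α v * pd t x s y ^ α * supN T w := by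
      gcongr
      exacts [hv.abs_le_supN ht x, hw.abs_sub_le ht hs x y, hv.abs_sub_le ht hs x y,
        hw.abs_le_supN hs y]
    _ ≤ hNorm T α v * hNorm T α w * pd t x s y ^ α := by
      rw [← mul_assoc, mul_right_comm (hSemi T α v), ← add_mul]
      unfold hNorm
      gcongr
      linarith [mul_nonneg ‹0 ≤ supN T v› ‹0 ≤ supN T w›,
        mul_nonneg ‹0 ≤ hSemi T α v› ‹0 ≤ hSemi T α w›]

lemma mul : MemCa T α (v * w) := by
  refine ⟨hv.1.mul hw.1, ⟨supN T v * supN T w, fun t ht x => ?_⟩,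
    hNorm T α v * hNorm T α w, fun t ht s hs x y => hv.abs_mul_sub_mul_le hw ht hs x y⟩
  rw [Pi.mul_apply, Pi.mul_apply, abs_mul]
  gcongr
  exacts [supN_nonneg T v, hv.abs_le_supN ht x, hw.abs_le_supN ht x]

lemma hSemi_mul_le : hSemi T α (v * w) ≤ hNorm T α v * hNorm T α w :=
  hSemi_le (mul_nonneg (hNorm_nonneg T α v) (hNorm_nonneg T α w)) fun _ ht _ hs x y =>
    hv.abs_mul_sub_mul_le hw ht hs x y

end MemCa

end Seminorms

namespace MemC12a

variable {T α : ℝ} {u ut ux uxx : ℝ → ℝ → ℝ} (hu : MemC12a T α u ut ux uxx) (hT : 0 < T)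
  (hα : 0 < α)
include hu hα

lemma hasDerivWithinAt_ut {t : ℝ} (ht : t ∈ Ico 0 T) (x : ℝ) :
    HasDerivWithinAt (fun s => u s x) (ut t x) (Ici t) t := by
  have hsub : Ioo t T ⊆ Ioo 0 T := Ioo_subset_Ioo_left ht.1
  have htIcc : t ∈ Icc 0 T := Ico_subset_Icc_self ht
  have hle : 𝓝[Ioo t T] t ≤ 𝓝[Icc 0 T] t := nhdsWithin_mono t (hsub.trans Ioo_subset_Icc_self)
  refine hasDerivWithinAt_Ici_of_tendsto_deriv (s := Ioo t T)
    (fun s hs => (hu.hasUt s (hsub hs) x).differentiableAt.differentiableWithinAt)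
    (((hu.memU.tendstoUniformly hα htIcc).tendsto_at x).mono_left hle)
    (Ioo_mem_nhdsGT ht.2) ?_
  rw [← nhdsWithin_Ioo_eq_nhdsGT ht.2]
  refine (((hu.memUt.tendstoUniformly hα htIcc).tendsto_at x).mono_left hle).congr' ?_
  filter_upwards [self_mem_nhdsWithin] with s hs using (hu.hasUt s (hsub hs) x).deriv.symm

include hT

lemma hasDerivAt_ux : ∀ t ∈ Icc 0 T, ∀ x, HasDerivAt (u t) (ux t x) x :=
  hu.memU.hasDerivAt_of_forall_Ioo hu.memUx hT hα hu.hasUx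

lemma hasDerivAt_uxx : ∀ t ∈ Icc 0 T, ∀ x, HasDerivAt (ux t) (uxx t x) x :=
  hu.memUx.hasDerivAt_of_forall_Ioo hu.memUxx hT hα hu.hasUxx

lemma isClassicalOn : IsClassicalOn 0 T univ u ut ux uxx where
  continuousOn := hu.memU.1
  hasDerivWithinAt_time _ hs y _ := hu.hasDerivWithinAt_ut hα hs y
  hasDerivAt_space s hs y _ := hu.hasDerivAt_ux hT hα s (Ico_subset_Icc_self hs) y
  hasDerivAt_space2 s hs y _ := hu.hasDerivAt_uxx hT hα s (Ico_subset_Icc_self hs) y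

end MemC12a

/-! ### Spatial Hölder regularity -/

/-- The odd part (doubled) of `g` about the point `x₀`. It vanishes at `y = 0`, which turns a bound
on increments of `g` into a boundary value problem on a half-line. -/
def antisymmDiff (x₀ : ℝ) (g : ℝ → ℝ) (y : ℝ) : ℝ := g (x₀ + y) - g (x₀ - y)

lemma antisymmDiff_zero (x₀ : ℝ) (g : ℝ → ℝ) : antisymmDiff x₀ g 0 = 0 := by
  simp [antisymmDiff]

lemma abs_antisymmDiff_le {g : ℝ → ℝ} {m : ℝ} (hg : ∀ x, |g x| ≤ m) (x₀ y : ℝ) :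
    |antisymmDiff x₀ g y| ≤ 2 * m :=
  (abs_sub _ _).trans ((add_le_add (hg _) (hg _)).trans_eq (two_mul m).symm)

lemma holderBound_of_antisymmDiff {α K : ℝ} {g : ℝ → ℝ} (hK : 0 ≤ K)
    (h : ∀ x₀ y, 0 < y → |antisymmDiff x₀ g y| ≤ K * (2 * y) ^ α) : HolderBound α K g := by
  have hlt : ∀ x y, x < y → |g y - g x| ≤ K * |y - x| ^ α := fun x y hxy => by
    have := h ((x + y) / 2) ((y - x) / 2) (by linarith)
    rw [abs_of_pos (sub_pos.2 hxy)]
    convert this using 2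
    · simp only [antisymmDiff]
      ring_nf
    · ring_nf
  intro x y
  rcases lt_trichotomy x y with hxy | rfl | hxy
  · rw [norm_sub_rev, abs_sub_comm]
    exact hlt x y hxy
  · simpa using mul_nonneg hK (Real.rpow_nonneg le_rfl α)
  · exact hlt y x hxy

namespace IsClassicalOn

variable {t₀ t₁ : ℝ} {w wt wy wyy : ℝ → ℝ → ℝ} (hw : IsClassicalOn t₀ t₁ univ w wt wy wyy)
include hw

lemma continuousOn_comp {φ : ℝ → ℝ} (hφ : Continuous φ) :
    ContinuousOn (fun p : ℝ × ℝ => w p.1 (φ p.2)) (Icc t₀ t₁ ×ˢ univ) :=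
  hw.continuousOn.comp (f := fun p : ℝ × ℝ => (p.1, φ p.2)) (by fun_prop)
    fun _ hp => ⟨hp.1, mem_univ _⟩

lemma secondDiff (ε : ℝ) : IsClassicalOn t₀ t₁ univ (fun s => secondDiff ε (w s))
    (fun s => secondDiff ε (wt s)) (fun s => secondDiff ε (wy s))
    (fun s => secondDiff ε (wyy s)) where
  continuousOn := ((hw.continuousOn_comp (continuous_add_const ε)).sub hw.continuousOn).sub
    (hw.continuousOn.sub (hw.continuousOn_comp (continuous_id.sub continuous_const)))
  hasDerivWithinAt_time s hs y _ := by
    have h := fun y => hw.hasDerivWithinAt_time s hs y (by simp)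
    exact ((h _).sub (h _)).sub ((h _).sub (h _))
  hasDerivAt_space s hs y _ :=
    hasDerivAt_secondDiff (fun y => hw.hasDerivAt_space s hs y (by simp)) ε y
  hasDerivAt_space2 s hs y _ :=
    hasDerivAt_secondDiff (fun y => hw.hasDerivAt_space2 s hs y (by simp)) ε y

lemma antisymmDiff (x₀ : ℝ) : IsClassicalOn t₀ t₁ univ (fun s => antisymmDiff x₀ (w s))
    (fun s => antisymmDiff x₀ (wt s)) (fun s y => wy s (x₀ + y) + wy s (x₀ - y))
    (fun s => antisymmDiff x₀ (wyy s)) where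
  continuousOn := (hw.continuousOn_comp (continuous_const_add x₀)).sub
    (hw.continuousOn_comp (continuous_const.sub continuous_id))
  hasDerivWithinAt_time s hs y _ :=
    (hw.hasDerivWithinAt_time s hs _ (by simp)).sub (hw.hasDerivWithinAt_time s hs _ (by simp))
  hasDerivAt_space s hs y _ :=
    (((hw.hasDerivAt_space s hs _ (by simp)).comp_const_add x₀ y).sub
      ((hw.hasDerivAt_space s hs _ (by simp)).comp_const_sub x₀ y)).congr_deriv (sub_neg_eq_add _ _)
  hasDerivAt_space2 s hs y _ :=
    (((hw.hasDerivAt_space2 s hs _ (by simp)).comp_const_add x₀ y).add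
      ((hw.hasDerivAt_space2 s hs _ (by simp)).comp_const_sub x₀ y)).congr_deriv rfl

end IsClassicalOn

section SpatialRegularity

variable {T α a U F G : ℝ} {u ut ux uxx : ℝ → ℝ → ℝ} (hu : MemC12a T α u ut ux uxx) (hT : 0 < T)
  (hα : 0 < α) (ha : 0 < a) (hU : ∀ t ∈ Icc 0 T, HolderBound α U (uxx t))
  (hF : ∀ t ∈ Icc 0 T, HolderBound α F ((ut + a • uxx) t)) (hG : HolderBound α G (uxx T))
include hu hT hα ha hU hF hG

lemma abs_antisymmDiff_secondDiff_le {t R y ε : ℝ} (ht : t ∈ Icc 0 T) (hR : 0 < R)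
    (hy : y ∈ Icc 0 R) (hε : 0 ≤ ε) (x₀ : ℝ) :
    |antisymmDiff x₀ (secondDiff ε (u t)) y| ≤ U * (2 * R) ^ α * ε ^ 2 / R * y +
      4 * F * ε ^ α / (2 * a) * (y * (R - y)) + G * (2 * R) ^ α * ε ^ 2 := by
  have hwidth : ∀ z, x₀ + z - (x₀ - z) = 2 * z := fun z => by ring
  have hF0 : 0 ≤ F := (hF t ht).nonneg
  refine (((hu.isClassicalOn hT hα).secondDiff ε).antisymmDiff x₀ |>.mono
    (subset_univ (Icc 0 R))).abs_le_barrier hR ha ?_ (by positivity) ?_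
    (fun _ _ => antisymmDiff_zero _ _) ?_ t ht y hy
  · intro s hs z _
    have hodd := abs_antisymmDiff_le
      (fun x => (hF s (Ico_subset_Icc_self hs)).norm_secondDiff_le hε x) x₀ z
    convert hodd using 1
    · simp only [antisymmDiff, secondDiff, Pi.add_apply, Pi.smul_apply, smul_eq_mul]
      ring_nf
    · ring
  · intro z hz
    have hTmem : T ∈ Icc 0 T := ⟨hT.le, le_rfl⟩
    refine (norm_secondDiff_sub_secondDiff_le (hu.hasDerivAt_ux hT hα T hTmem)
      (hu.hasDerivAt_uxx hT hα T hTmem) hG hε _ _).trans ?_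
    rw [hwidth, abs_of_nonneg (by linarith [hz.1])]
    gcongr
    exacts [hG.nonneg, by linarith [hz.1], hz.2]
  · intro s hs
    refine (norm_secondDiff_sub_secondDiff_le (hu.hasDerivAt_ux hT hα s hs)
      (hu.hasDerivAt_uxx hT hα s hs) (hU s hs) hε _ _).trans_eq ?_
    rw [hwidth, abs_of_pos (by positivity)]

/-- The second difference has step `2κy` and the half-line is cut at `νy`, where `2y` is the
distance of the two points compared: small `κ` and large `ν` make the factor of `U` small. -/
lemma holderBound_uxx_of_holderBound {κ ν : ℝ} (hκ : 0 < κ) (hν : 1 ≤ ν) :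
    ∀ t ∈ Icc 0 T, HolderBound α ((2 * κ ^ α + ν ^ (α - 1)) * U +
      (ν * κ ^ α / (2 * a * κ ^ 2) * F + ν ^ α * G)) (uxx t) := by
  intro t ht
  have hU0 : 0 ≤ U := (hU t ht).nonneg
  have hF0 : 0 ≤ F := (hF t ht).nonneg
  have hG0 : 0 ≤ G := hG.nonneg
  have hν0 : 0 < ν := one_pos.trans_le hν
  refine holderBound_of_antisymmDiff (by positivity) fun x₀ y hy => ?_
  have hyν : y ≤ ν * y := le_mul_of_one_le_left hy.le hν
  set ε := κ * (2 * y) with hε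
  have hε0 : 0 < ε := by positivity
  have hbarrier := abs_antisymmDiff_secondDiff_le hu hT hα ha hU hF hG ht (mul_pos hν0 hy)
    ⟨hy.le, hyν⟩ hε0.le x₀
  have happrox : ∀ x, |secondDiff ε (u t) x - ε ^ 2 * uxx t x| ≤ U * ε ^ α * ε ^ 2 := fun x =>
    norm_secondDiff_sub_smul_le (hu.hasDerivAt_ux hT hα t ht) (hu.hasDerivAt_uxx hT hα t ht) hα.le
      (hU t ht) hε0.le x
  have hsum : ε ^ 2 * |antisymmDiff x₀ (uxx t) y| ≤ 2 * (U * ε ^ α * ε ^ 2) +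
      (U * (2 * (ν * y)) ^ α * ε ^ 2 / (ν * y) * y +
        4 * F * ε ^ α / (2 * a) * (ν * y ^ 2) + G * (2 * (ν * y)) ^ α * ε ^ 2) := by
    have hdrop : 4 * F * ε ^ α / (2 * a) * (y * (ν * y - y)) ≤
        4 * F * ε ^ α / (2 * a) * (ν * y ^ 2) :=
      mul_le_mul_of_nonneg_left (by nlinarith) (by positivity)
    calc ε ^ 2 * |antisymmDiff x₀ (uxx t) y|
        = |antisymmDiff x₀ (secondDiff ε (u t)) y -
            antisymmDiff x₀ (fun x => secondDiff ε (u t) x - ε ^ 2 * uxx t x) y| := by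
          rw [← abs_of_nonneg (sq_nonneg ε), ← abs_mul, abs_of_nonneg (sq_nonneg ε)]
          simp only [antisymmDiff]
          ring_nf
      _ ≤ _ := (abs_sub _ _).trans <| by
          linarith [abs_antisymmDiff_le happrox x₀ y]
  refine le_of_mul_le_mul_left (hsum.trans_eq ?_) (show 0 < ε ^ 2 by positivity)
  rw [mul_left_comm 2 ν y, Real.mul_rpow hν0.le (by positivity), hε,
    Real.mul_rpow hκ.le (by positivity), Real.rpow_sub_one hν0.ne']
  field_simp
  ring

end SpatialRegularity

lemma exists_holderBound_uxx {α a : ℝ} (hα : 0 < α) (hα1 : α < 1) (ha : 0 < a) :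
    ∃ C, 0 < C ∧ ∀ {T F G : ℝ} {u ut ux uxx : ℝ → ℝ → ℝ}, 0 < T → MemC12a T α u ut ux uxx →
      (∀ t ∈ Icc 0 T, HolderBound α F ((ut + a • uxx) t)) → HolderBound α G (uxx T) →
      ∀ t ∈ Icc 0 T, HolderBound α (C * (F + G)) (uxx t) := by
  set κ : ℝ := (1 / 8) ^ α⁻¹ with hκ
  set ν : ℝ := (1 / 4) ^ (α - 1)⁻¹ with hν
  have hκ0 : 0 < κ := by positivity
  have hν1 : 1 ≤ ν := Real.one_le_rpow_of_pos_of_le_one_of_nonpos (by norm_num) (by norm_num)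
    (inv_nonpos.2 (by linarith))
  have hhalf : 2 * κ ^ α + ν ^ (α - 1) = 1 / 2 := by
    rw [hκ, hν, Real.rpow_inv_rpow (by norm_num) hα.ne',
      Real.rpow_inv_rpow (by norm_num) (by linarith)]
    norm_num
  have : 0 < ν := one_pos.trans_le hν1
  refine ⟨2 * (ν * κ ^ α / (2 * a * κ ^ 2) + ν ^ α), by positivity,
    fun {T F G u ut ux uxx} hT hu hF hG => ?_⟩
  set S := {U : ℝ | ∀ t ∈ Icc 0 T, HolderBound α U (uxx t)}
  have hS0 : T ∈ Icc 0 T := ⟨hT.le, le_rfl⟩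
  have hbdd : BddBelow S := ⟨0, fun U hU => (hU T hS0).nonneg⟩
  have hbest : sInf S ∈ S := fun t ht x y =>
    le_sInf_mul ⟨_, fun _ => hu.memUxx.holderBound⟩ (by positivity) fun U hU => hU t ht x y
  have hself : sInf S ≤ 1 / 2 * sInf S + (ν * κ ^ α / (2 * a * κ ^ 2) * F + ν ^ α * G) :=
    csInf_le hbdd (hhalf ▸ holderBound_uxx_of_holderBound hu hT hα ha hbest hF hG hκ0 hν1)
  have hF0 : 0 ≤ F := (hF T hS0).nonneg
  have hG0 : 0 ≤ G := hG.nonneg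
  have hle : sInf S ≤ 2 * (ν * κ ^ α / (2 * a * κ ^ 2) + ν ^ α) * (F + G) := by
    have : 0 ≤ ν * κ ^ α / (2 * a * κ ^ 2) * G := by positivity
    have : 0 ≤ ν ^ α * F := by positivity
    linarith
  exact fun t ht x y => (hbest t ht x y).trans (by gcongr)

/-! ### Regularity in time -/

namespace MemC12a

variable {T α U B : ℝ} {u ut ux uxx : ℝ → ℝ → ℝ} (hu : MemC12a T α u ut ux uxx) (hT : 0 < T)
  (hα : 0 < α)
include hu hα

section TimeRegularity

variable (hB : ∀ t ∈ Icc 0 T, HolderBound α B (ut t))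
include hB

lemma abs_mixed_diff_le {t s : ℝ} (ht : t ∈ Icc 0 T) (hs : s ∈ Icc 0 T) (x y : ℝ) :
    |(u t x - u t y) - (u s x - u s y)| ≤ B * |x - y| ^ α * |t - s| := by
  wlog hst : s ≤ t generalizing t s
  · rw [abs_sub_comm, abs_sub_comm t]
    exact this hs ht (le_of_not_ge hst)
  have hIcc : Icc s t ⊆ Icc 0 T := Icc_subset_Icc hs.1 ht.2
  have hcont : ∀ z, ContinuousOn (fun r => u r z) (Icc s t) := fun z =>
    hu.memU.1.comp (f := fun r => (r, z)) (by fun_prop) fun r hr => ⟨hIcc hr, mem_univ z⟩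
  have hderiv : ∀ r ∈ Ico s t, ∀ z, HasDerivWithinAt (fun r => u r z) (ut r z) (Ici r) r :=
    fun r hr => hu.hasDerivWithinAt_ut hα ⟨hs.1.trans hr.1, hr.2.trans_le ht.2⟩
  have := norm_image_sub_le_of_norm_deriv_right_le_segment ((hcont x).sub (hcont y))
    (fun r hr => (hderiv r hr x).sub (hderiv r hr y))
    (fun r hr => hB r (hIcc (Ico_subset_Icc_self hr)) x y) t ⟨hst, le_rfl⟩
  rwa [← abs_of_nonneg (sub_nonneg.2 hst)] at this

variable (hU : ∀ t ∈ Icc 0 T, HolderBound α U (uxx t))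
include hT hU

lemma abs_uxx_sub_le_sqrt {t s : ℝ} (ht : t ∈ Icc 0 T) (hs : s ∈ Icc 0 T) (x : ℝ) :
    |uxx t x - uxx s x| ≤ (2 * U + 2 * B) * √|t - s| ^ α := by
  rcases eq_or_ne t s with rfl | hts
  · simp [hα.ne']
  set ε := √|t - s|
  have hε0 : 0 < ε := Real.sqrt_pos.2 (abs_pos.2 (sub_ne_zero.2 hts))
  have hεsq : |t - s| = ε ^ 2 := (Real.sq_sqrt (abs_nonneg _)).symm
  have happrox : ∀ r ∈ Icc 0 T, |secondDiff ε (u r) x - ε ^ 2 * uxx r x| ≤ U * ε ^ α * ε ^ 2 :=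
    fun r hr => norm_secondDiff_sub_smul_le (hu.hasDerivAt_ux hT hα r hr)
      (hu.hasDerivAt_uxx hT hα r hr) hα.le (hU r hr) hε0.le x
  have hright := hu.abs_mixed_diff_le hα hB ht hs (x + ε) x
  have hleft := hu.abs_mixed_diff_le hα hB ht hs x (x - ε)
  rw [hεsq, add_sub_cancel_left, abs_of_pos hε0] at hright
  rw [hεsq, sub_sub_cancel, abs_of_pos hε0] at hleft
  have hsd : |secondDiff ε (u t) x - secondDiff ε (u s) x| ≤ 2 * (B * ε ^ α * ε ^ 2) := by
    rw [secondDiff, secondDiff, sub_sub_sub_comm, two_mul]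
    exact (abs_sub _ _).trans (add_le_add hright hleft)
  refine le_of_mul_le_mul_left ?_ (show 0 < ε ^ 2 by positivity)
  calc ε ^ 2 * |uxx t x - uxx s x| = |ε ^ 2 * (uxx t x - uxx s x)| := by
        rw [abs_mul, abs_of_nonneg (sq_nonneg ε)]
    _ ≤ ε ^ 2 * ((2 * U + 2 * B) * ε ^ α) := by
      have := abs_le.1 hsd
      have := abs_le.1 (happrox t ht)
      have := abs_le.1 (happrox s hs)
      exact abs_le.2 ⟨by linarith, by linarith⟩

lemma abs_ux_sub_le_sqrt {t s : ℝ} (ht : t ∈ Icc 0 T) (hs : s ∈ Icc 0 T) (x : ℝ) :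
    |ux t x - ux s x| ≤ (2 * U + 3 * B) * √|t - s| ^ (1 + α) := by
  rcases eq_or_ne t s with rfl | hts
  · simp [(add_pos one_pos hα).ne']
  have huxx := hu.abs_uxx_sub_le_sqrt hT hα hB hU ht hs
  have hmixed := hu.abs_mixed_diff_le hα hB ht hs
  set ε := √|t - s|
  have hε0 : 0 < ε := Real.sqrt_pos.2 (abs_pos.2 (sub_ne_zero.2 hts))
  have hεsq : |t - s| = ε ^ 2 := (Real.sq_sqrt (abs_nonneg _)).symm
  have htaylor := norm_sub_sub_smul_deriv_le (x := x)
    (fun z => (hu.hasDerivAt_ux hT hα t ht z).sub (hu.hasDerivAt_ux hT hα s hs z))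
    (fun z => (hu.hasDerivAt_uxx hT hα t ht z).sub (hu.hasDerivAt_uxx hT hα s hs z)) hε0.le
    (fun z _ => huxx z)
  have hincr := hmixed (x + ε) x
  rw [hεsq, add_sub_cancel_left, abs_of_pos hε0, ← sub_sub_sub_comm] at hincr
  refine le_of_mul_le_mul_left ?_ hε0
  calc ε * |ux t x - ux s x| = |ε * (ux t x - ux s x)| := by rw [abs_mul, abs_of_pos hε0]
    _ ≤ B * ε ^ α * ε ^ 2 + (2 * U + 2 * B) * ε ^ α * ε ^ 2 :=
      (norm_le_norm_add_norm_sub _ _).trans (add_le_add hincr htaylor)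
    _ = ε * ((2 * U + 3 * B) * ε ^ (1 + α)) := by
      rw [Real.rpow_one_add' hε0.le (by linarith)]
      ring

lemma hSemi_uxx_le : hSemi T α uxx ≤ 3 * U + 2 * B := by
  have hTmem : T ∈ Icc 0 T := ⟨hT.le, le_rfl⟩
  have hU0 := (hU T hTmem).nonneg
  have hB0 := (hB T hTmem).nonneg
  refine (hSemi_le_add hα.le hU0 (by positivity) hU fun t ht s hs x =>
    hu.abs_uxx_sub_le_sqrt hT hα hB hU ht hs x).trans_eq ?_
  ring

end TimeRegularity

section Interpolation

variable {δ : ℝ} (hδ : 0 < δ)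
include hT hδ

lemma abs_ux_le {t : ℝ} (ht : t ∈ Icc 0 T) (x : ℝ) :
    |ux t x| ≤ hSemi T α uxx * δ ^ (1 + α) + 6 * supN T u / δ :=
  norm_deriv_le_of_holderBound (hu.hasDerivAt_ux hT hα t ht) (hu.hasDerivAt_uxx hT hα t ht) hα.le
    (hu.memUxx.holderBound ht) (fun _ => hu.memU.abs_le_supN ht _) hδ x

lemma holderBound_ux (hα1 : α ≤ 1) {t : ℝ} (ht : t ∈ Icc 0 T) :
    HolderBound α (3 * hSemi T α uxx * δ + 16 * (supN T u / δ ^ (1 + α))) (ux t) :=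
  holderBound_deriv (hu.hasDerivAt_ux hT hα t ht) (hu.hasDerivAt_uxx hT hα t ht) hα.le
    (hu.memUxx.holderBound ht) (fun _ => hu.memU.abs_le_supN ht _) hδ hα1

lemma abs_ux_sub_le {t s : ℝ} (ht : t ∈ Icc 0 T) (hs : s ∈ Icc 0 T) (x : ℝ) :
    |ux t x - ux s x| ≤ ((3 * hSemi T α ut + 4 * hSemi T α uxx) * δ +
      12 * (supN T u / δ ^ (1 + α))) * √|t - s| ^ α := by
  have := hSemi_nonneg T α ut
  have := hSemi_nonneg T α uxx
  have := supN_nonneg T u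
  have hrpow := hu.abs_ux_sub_le_sqrt hT hα (fun _ => hu.memUt.holderBound)
    (fun _ => hu.memUxx.holderBound) ht hs x
  have hconst : |ux t x - ux s x| ≤ _ := (abs_sub _ _).trans
    (add_le_add (hu.abs_ux_le hT hα hδ ht x) (hu.abs_ux_le hT hα hδ hs x))
  refine (le_mul_rpow_of_le_mul_rpow_of_le hα.le (le_add_of_nonneg_left zero_le_one) hδ
    (Real.sqrt_nonneg _) (by positivity) (by positivity) hrpow hconst).trans_eq ?_
  rw [add_sub_cancel_right, Real.rpow_one, Real.rpow_one_add' hδ.le (by linarith)]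
  field_simp
  ring

lemma hNorm_ux_le (hα1 : α ≤ 1) (hδ1 : δ ≤ 1) :
    hNorm T α ux ≤ 34 * (δ * (hSemi T α ut + hSemi T α uxx) + supN T u / δ ^ (1 + α)) := by
  have hut := hSemi_nonneg T α ut
  have huxx := hSemi_nonneg T α uxx
  have hm := supN_nonneg T u
  have hδpow : δ ^ (1 + α) ≤ δ :=
    (Real.rpow_le_rpow_of_exponent_ge hδ hδ1 (le_add_of_nonneg_right hα.le)).trans_eq
      (Real.rpow_one δ)
  have hsup : supN T ux ≤ hSemi T α uxx * δ + 6 * (supN T u / δ ^ (1 + α)) :=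
    supN_le (by positivity) fun t ht x => (hu.abs_ux_le hT hα hδ ht x).trans <| by
      rw [mul_div_assoc]
      gcongr
  have hsemi : hSemi T α ux ≤ _ := hSemi_le_add hα.le (by positivity) (by positivity)
    (fun t ht => hu.holderBound_ux hT hα hδ hα1 ht)
    (fun t ht s hs x => hu.abs_ux_sub_le hT hα hδ ht hs x)
  refine (add_le_add hsup hsemi).trans ?_
  linarith [mul_nonneg hδ.le hut, mul_nonneg hδ.le huxx]

end Interpolation

end MemC12a

/-! ### The Schauder estimate -/

lemma exists_hSemi_le {α a : ℝ} (hα : 0 < α) (hα1 : α < 1) (ha : 0 < a) :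
    ∃ C, 0 < C ∧ ∀ {T : ℝ} {u ut ux uxx : ℝ → ℝ → ℝ}, 0 < T → MemC12a T α u ut ux uxx →
      hSemi T α ut + hSemi T α uxx ≤
        C * (hSemi T α (ut + a • uxx) + gHSemi α (uxx T)) := by
  obtain ⟨C, hC, hspace⟩ := exists_holderBound_uxx hα hα1 ha
  refine ⟨1 + (1 + a) * (3 * C + 2 * (1 + a * C)), by positivity, fun {T u ut ux uxx} hT hu => ?_⟩
  have hmem : MemCa T α (ut + a • uxx) := hu.memUt.add (hu.memUxx.const_smul a)
  have hut_eq : (ut + a • uxx) - a • uxx = ut := add_sub_cancel_right _ _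
  have hU : ∀ t ∈ Icc 0 T, HolderBound α (C * (hSemi T α (ut + a • uxx) + gHSemi α (uxx T)))
      (uxx t) :=
    hspace hT hu (fun _ => hmem.holderBound) (hu.memUxx.holderBound ⟨hT.le, le_rfl⟩).gHSemi
  have hut : hSemi T α ut ≤ hSemi T α (ut + a • uxx) + a * hSemi T α uxx := by
    have := hmem.hSemi_sub_le (hu.memUxx.const_smul a)
    rw [hut_eq] at this
    exact this.trans (add_le_add_right (hu.memUxx.hSemi_const_smul_le ha.le) _)
  set F := hSemi T α (ut + a • uxx)
  set G := gHSemi α (uxx T)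
  have hB : ∀ t ∈ Icc 0 T, HolderBound α (F + a * (C * (F + G))) (ut t) := fun t ht => by
    have := (hmem.holderBound ht).sub ((hU t ht).const_smul ha.le)
    rwa [← Pi.smul_apply, ← Pi.sub_apply, hut_eq] at this
  have hG : 0 ≤ G := gHSemi_nonneg α _
  have huxx : hSemi T α uxx ≤ (3 * C + 2 * (1 + a * C)) * (F + G) :=
    (hu.hSemi_uxx_le hT hα hB hU).trans (by linarith)
  have := mul_le_mul_of_nonneg_left huxx (add_pos one_pos ha).le
  linarith

lemma hSemi_heat_le_of_transport {T α a : ℝ} {u ut ux uxx h : ℝ → ℝ → ℝ}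
    (hu : MemC12a T α u ut ux uxx) (hh : MemCa T α h) :
    hSemi T α (ut + a • uxx) ≤
      hSemi T α (ut + a • uxx + h * ux) + hNorm T α h * hNorm T α ux := by
  have hmem : MemCa T α (ut + a • uxx + h * ux) :=
    (hu.memUt.add (hu.memUxx.const_smul a)).add (hh.mul hu.memUx)
  have := hmem.hSemi_sub_le (hh.mul hu.memUx)
  rw [add_sub_cancel_right] at this
  exact this.trans (add_le_add_right (hh.hSemi_mul_le hu.memUx) _)

lemma exists_hNorm_mul_hNorm_ux_le {α c : ℝ} (hα : 0 < α) (hα1 : α ≤ 1) (hc : 0 < c)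
    (hc1 : c ≤ 1) :
    ∃ E, 0 < E ∧ ∀ {T : ℝ} {u ut ux uxx : ℝ → ℝ → ℝ} (h : ℝ → ℝ → ℝ), 0 < T →
      MemC12a T α u ut ux uxx →
      hNorm T α h * hNorm T α ux ≤
        c * (hSemi T α ut + hSemi T α uxx) + E * ((1 + hNorm T α h ^ (2 + α)) * supN T u) := by
  obtain ⟨E, hE, hscale⟩ := exists_scale hα.le (c := c / 34) (by positivity) (by linarith)
  refine ⟨34 * E, by positivity, fun {T u ut ux uxx} h hT hu => ?_⟩
  have hh := hNorm_nonneg T α h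
  obtain ⟨δ, hδ, hδ1, hsmall, hlarge⟩ := hscale (hNorm T α h) hh
  have hS := add_nonneg (hSemi_nonneg T α ut) (hSemi_nonneg T α uxx)
  have hm := supN_nonneg T u
  calc hNorm T α h * hNorm T α ux
      ≤ hNorm T α h * (34 * (δ * (hSemi T α ut + hSemi T α uxx) + supN T u / δ ^ (1 + α))) := by
        gcongr
        exact hu.hNorm_ux_le hT hα hδ hα1 hδ1
    _ = 34 * (hNorm T α h * δ * (hSemi T α ut + hSemi T α uxx) +
          hNorm T α h / δ ^ (1 + α) * supN T u) := by ring
    _ ≤ 34 * (c / 34 * (hSemi T α ut + hSemi T α uxx) +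
          E * (1 + hNorm T α h ^ (2 + α)) * supN T u) := by gcongr
    _ = _ := by ring

theorem stmt_16_general (α a : ℝ) (hα0 : 0 < α) (hα1 : α < 1) (ha : 0 < a) :
    ∃ C : ℝ, 0 < C ∧
      ∀ T : ℝ, 0 < T →
      ∀ u ut ux uxx h : ℝ → ℝ → ℝ, MemC12a T α u ut ux uxx → MemCa T α h →
        hSemi T α ut + hSemi T α uxx ≤
          C * (hSemi T α (fun t x => ut t x + a * uxx t x + h t x * ux t x) +
            gHSemi α (fun x => uxx T x) +
            (1 + hNorm T α h ^ (2 + α)) * supN T u) := by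
  obtain ⟨C, hC, hmodel⟩ := exists_hSemi_le hα0 hα1 ha
  have habsorb : C * (1 / (1 + 2 * C)) ≤ 1 / 2 := by
    rw [mul_one_div, div_le_div_iff₀ (by positivity) two_pos]
    linarith
  obtain ⟨E, hE, hdrift⟩ := exists_hNorm_mul_hNorm_ux_le (c := 1 / (1 + 2 * C)) hα0 hα1.le
    (by positivity) (div_le_one_of_le₀ (by linarith) (by positivity))
  refine ⟨2 * C * (1 + E), by positivity, fun T hT u ut ux uxx h hu hh => ?_⟩
  change _ ≤ _ * (hSemi T α (ut + a • uxx + h * ux) + gHSemi α (uxx T) + _)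
  set S := hSemi T α ut + hSemi T α uxx
  set P := hSemi T α (ut + a • uxx + h * ux)
  set G := gHSemi α (uxx T)
  set W := (1 + hNorm T α h ^ (2 + α)) * supN T u
  set c := 1 / (1 + 2 * C)
  have hS : 0 ≤ S := add_nonneg (hSemi_nonneg T α ut) (hSemi_nonneg T α uxx)
  have hPG : 0 ≤ P + G := add_nonneg (hSemi_nonneg T α _) (gHSemi_nonneg α _)
  have hW : 0 ≤ W := mul_nonneg (add_nonneg zero_le_one
    (Real.rpow_nonneg (hNorm_nonneg T α h) _)) (supN_nonneg T u)
  have hheat : hSemi T α (ut + a • uxx) ≤ P + (c * S + E * W) :=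
    (hSemi_heat_le_of_transport hu hh).trans (add_le_add_right (hdrift h hT hu) P)
  have hself : S ≤ C * (P + (c * S + E * W) + G) :=
    (hmodel hT hu).trans (mul_le_mul_of_nonneg_left (add_le_add_left hheat G) hC.le)
  have := mul_le_mul_of_nonneg_right habsorb hS
  have := mul_nonneg hC.le hW
  have := mul_nonneg (mul_pos hC hE).le hPG
  linarith

/-- the Hölder estimate with a transport term. -/
theorem stmt_16 (α : ℝ) (hα0 : 0 < α) (hα1 : α < 1) :
    ∃ C : ℝ, 0 < C ∧
      ∀ T : ℝ, 0 < T →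
      ∀ u ut ux uxx h : ℝ → ℝ → ℝ, MemC12a T α u ut ux uxx → MemCa T α h →
        hSemi T α ut + hSemi T α uxx ≤
          C * (hSemi T α (fun t x => ut t x + (1/2) * uxx t x + h t x * ux t x) +
            gHSemi α (fun x => uxx T x) +
            (1 + hNorm T α h ^ (2 + α)) * supN T u) :=
  stmt_16_general α (1 / 2) hα0 hα1 (by norm_num)
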